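/- arXiv:math/0108094 — 2 statements merged into one kernel-verified Lean document; each statement's English description precedes it below -/
import Mathlib

section
/- For every j with 0 ≤ j ≤ n−2 one has the falling-factorial identity D_1·(D_1 − 1)·(D_1 − 2)···(D_1 − j) = D_{j+1} in ℚ[S_n], where an integer m denotes the scalar m times the identity of the group algebra. -/
/-- `D n j` is the element of the group algebra `ℚ[S_n]` given by the sum of all
permutations `ρ` of `{0,…,n-1}` (0-indexed version of `{1,…,n}`) that are strictly
increasing on the positions `{j,…,n-1}` (1-indexed: `{j+1,…,n}`); `D n 0 = 1`. -/
noncomputable def D (n j : ℕ) : MonoidAlgebra ℚ (Equiv.Perm (Fin n)) :=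
  ∑ ρ : Equiv.Perm (Fin n),
    if ∀ i i' : Fin n, j ≤ (i : ℕ) → i < i' → ρ i < ρ i'
    then MonoidAlgebra.of ℚ (Equiv.Perm (Fin n)) ρ else 0

/-!
The permutations increasing off the first position are the inverses of the cycles
`c a = Fin.cycleRange a`, which send the value `a` to `0` and keep the order of the other values.
Hence the coefficient of `π` in `D_1 * D_j` is the number of positions `p` such that `c (π p) * π`
is increasing on `{j, …, n - 1}`. For each of the `j` positions `p < j` this means that `π` is
increasing there; for `p = j` it means that `π` is increasing on `{j + 1, …, n - 1}`; for `p > j` it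
is impossible. So `D_1 * D_j = j * D_j + D_{j + 1}`, that is, `D_{j + 1} = (D_1 - j) * D_j`.
-/

open Equiv

lemma strictMono_perm_iff_eq_one {α : Type*} [LinearOrder α] [WellFoundedLT α] {π : Perm α} :
    StrictMono π ↔ π = 1 := by
  refine ⟨fun h ↦ ?_, by rintro rfl; exact strictMono_id⟩
  have hid : h.orderIsoOfSurjective π π.surjective = OrderIso.refl α := Subsingleton.elim _ _
  exact Equiv.ext fun i ↦ DFunLike.congr_fun hid i

section CycleRange

variable {n : ℕ}

lemma strictMonoOn_cycleRange (a : Fin n) : StrictMonoOn a.cycleRange {a}ᶜ := by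
  cases n with
  | zero => exact a.elim0
  | succ n =>
    intro x hx y hy hxy
    obtain ⟨x, rfl⟩ := Fin.exists_succAbove_eq hx
    obtain ⟨y, rfl⟩ := Fin.exists_succAbove_eq hy
    simpa [Fin.cycleRange_succAbove] using hxy

lemma strictMonoOn_cycleRange_mul_iff_of_notMem {S : Set (Fin n)} {p : Fin n} (hp : p ∉ S)
    (π : Perm (Fin n)) :
    StrictMonoOn ((π p).cycleRange * π) S ↔ StrictMonoOn π S := by
  have hπ : ∀ i ∈ S, π i ∈ ({π p}ᶜ : Set (Fin n)) := fun i hi h ↦ hp (π.injective h ▸ hi)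
  have hlt : ∀ i ∈ S, ∀ j ∈ S, ((π p).cycleRange (π i) < (π p).cycleRange (π j) ↔ π i < π j) :=
    fun i hi j hj ↦ (strictMonoOn_cycleRange (π p)).lt_iff_lt (hπ i hi) (hπ j hj)
  exact ⟨fun h i hi j hj hij ↦ (hlt i hi j hj).1 (h hi hj hij),
    fun h i hi j hj hij ↦ (hlt i hi j hj).2 (h hi hj hij)⟩

lemma strictMonoOn_cycleRange_mul_iff_of_mem {S : Set (Fin n)} {p : Fin n} (hp : p ∈ S)
    (π : Perm (Fin n)) :
    StrictMonoOn ((π p).cycleRange * π) S ↔ IsLeast S p ∧ StrictMonoOn π (S \ {p}) := by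
  have : NeZero n := .of_pos p.pos
  have hzero : ((π p).cycleRange * π) p = 0 := Fin.cycleRange_self (π p)
  have hpos : ∀ i, p < i → 0 < ((π p).cycleRange * π) i := fun i hi ↦
    Fin.pos_iff_ne_zero.2 fun h ↦
      hi.ne (((π p).cycleRange * π).injective (hzero.trans h.symm))
  have hmono := strictMonoOn_cycleRange_mul_iff_of_notMem (S := S \ {p}) (p := p) (by simp) π
  constructor
  · intro h
    refine ⟨⟨hp, fun i hi ↦ not_lt.1 fun hip ↦ ?_⟩, hmono.1 (h.mono Set.sdiff_subset)⟩
    exact Fin.not_lt_zero _ (hzero ▸ h hi hp hip)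
  · rintro ⟨hleast, h⟩
    rw [← Set.insert_sdiff_self_of_mem hp,
      strictMonoOn_insert_iff_of_forall_ge fun i hi ↦ hleast.2 hi.1]
    exact ⟨fun i _ hi ↦ hzero ▸ hpos i hi, hmono.2 h⟩

lemma strictMonoOn_compl_zero_iff [NeZero n] (π : Perm (Fin n)) :
    StrictMonoOn π {0}ᶜ ↔ π = (π 0).cycleRange⁻¹ := by
  have hleast : IsLeast (Set.univ : Set (Fin n)) 0 := ⟨trivial, fun i _ ↦ Fin.zero_le i⟩
  have h := strictMonoOn_cycleRange_mul_iff_of_mem (Set.mem_univ 0) π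
  rw [← Set.compl_eq_univ_sdiff, and_iff_right hleast, strictMonoOn_univ,
    strictMono_perm_iff_eq_one] at h
  rw [← h, mul_eq_one_iff_eq_inv']

end CycleRange

section SetSum

variable (R : Type*) [Semiring R] {G : Type*} [Fintype G]

/-- The sum in the monoid algebra `R[G]` of the elements of a subset `A` of a finite monoid `G`. -/
noncomputable def setSum [Monoid G] (A : Set G) : MonoidAlgebra R G :=
  ∑ g, A.indicator (MonoidAlgebra.of R G) g

lemma setSum_empty [Monoid G] : setSum R (∅ : Set G) = 0 := by
  simp [setSum]

lemma setSum_range_of_injective [Monoid G] {ι : Type*} [Fintype ι] {f : ι → G}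
    (hf : f.Injective) :
    setSum R (Set.range f) = ∑ i, MonoidAlgebra.of R G (f i) := by
  classical
  rw [setSum, ← Finset.sum_image (s := Finset.univ) (g := f) hf.injOn,
    Finset.sum_indicator_eq_sum_filter]
  congr 1
  ext g
  simp

lemma setSum_singleton_one [Monoid G] : setSum R ({1} : Set G) = 1 := by
  classical
  simp [setSum, Set.indicator_apply, MonoidAlgebra.one_def]

lemma of_inv_mul_setSum [Group G] (g : G) (A : Set G) :
    MonoidAlgebra.of R G g⁻¹ * setSum R A = setSum R {h | g * h ∈ A} := by
  classical
  rw [setSum, setSum, Finset.mul_sum, ← Equiv.sum_comp (Equiv.mulLeft g)]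
  refine Finset.sum_congr rfl fun h _ ↦ ?_
  by_cases hA : g * h ∈ A <;> simp [hA, MonoidAlgebra.single_mul_single]

lemma sum_setSum_apply {α : Type*} [Fintype α] [DecidableEq α] (P : α → Perm α → Prop) :
    ∑ p, setSum R {π : Perm α | P (π p) π} = ∑ a, setSum R {π : Perm α | P a π} := by
  classical
  simp only [setSum]
  rw [Finset.sum_comm, Finset.sum_comm (γ := α)]
  exact Finset.sum_congr rfl fun π _ ↦
    Equiv.sum_comp π fun a ↦ {τ : Perm α | P a τ}.indicator (MonoidAlgebra.of R (Perm α)) π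

end SetSum

section StrictMonoOnSum

variable (R : Type*) [Semiring R]

/-- The sum in the group algebra of all permutations that are strictly increasing on `S`. -/
noncomputable def strictMonoOnSum {α : Type*} [Fintype α] [LinearOrder α] (S : Set α) :
    MonoidAlgebra R (Perm α) :=
  setSum R {π : Perm α | StrictMonoOn π S}

lemma strictMonoOnSum_univ {α : Type*} [Fintype α] [LinearOrder α] :
    strictMonoOnSum R (Set.univ : Set α) = 1 := by
  simp only [strictMonoOnSum, strictMonoOn_univ, strictMono_perm_iff_eq_one]
  exact setSum_singleton_one R

variable {n : ℕ}

lemma strictMonoOnSum_compl_zero [NeZero n] :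
    strictMonoOnSum R ({0}ᶜ : Set (Fin n)) =
      ∑ a : Fin n, MonoidAlgebra.of R (Perm (Fin n)) a.cycleRange⁻¹ := by
  have happly (a : Fin n) : a.cycleRange⁻¹ 0 = a := a.cycleRange_symm_zero
  have hinj : Function.Injective fun a : Fin n ↦ a.cycleRange⁻¹ := fun a b h ↦ by
    rw [← happly a, ← happly b]
    exact congrArg (· 0) h
  have hrange : {π : Perm (Fin n) | StrictMonoOn π {0}ᶜ} =
      Set.range fun a : Fin n ↦ a.cycleRange⁻¹ := by
    ext π
    rw [Set.mem_ofPred_eq, strictMonoOn_compl_zero_iff]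
    constructor
    · exact fun h ↦ ⟨π 0, h.symm⟩
    · rintro ⟨a, rfl⟩
      rw [happly]
  rw [strictMonoOnSum, hrange, setSum_range_of_injective R hinj]

lemma strictMonoOnSum_compl_zero_mul [NeZero n] (S : Set (Fin n)) :
    strictMonoOnSum R {0}ᶜ * strictMonoOnSum R S =
      ∑ p : Fin n, setSum R {π : Perm (Fin n) | StrictMonoOn ((π p).cycleRange * π) S} := by
  rw [sum_setSum_apply R fun (a : Fin n) π ↦ StrictMonoOn (a.cycleRange * π) S,
    strictMonoOnSum_compl_zero, Finset.sum_mul]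
  exact Finset.sum_congr rfl fun a _ ↦ of_inv_mul_setSum R a.cycleRange _

lemma strictMonoOnSum_compl_zero_mul_of_isLeast [NeZero n] {S : Set (Fin n)} {m : Fin n}
    (hm : IsLeast S m) :
    strictMonoOnSum R {0}ᶜ * strictMonoOnSum R S =
      Sᶜ.ncard • strictMonoOnSum R S + strictMonoOnSum R (S \ {m}) := by
  classical
  have hterm (p : Fin n) :
      setSum R {π : Perm (Fin n) | StrictMonoOn ((π p).cycleRange * π) S} =
        (if p ∈ Sᶜ then strictMonoOnSum R S else 0) +
          if p = m then strictMonoOnSum R (S \ {m}) else 0 := by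
    by_cases hp : p ∈ S
    · simp only [strictMonoOn_cycleRange_mul_iff_of_mem hp, Set.mem_compl_iff, hp,
        not_true_eq_false, if_false, zero_add]
      split_ifs with hpm
      · simp only [hpm, hm, true_and, strictMonoOnSum]
      · have hnot : ¬IsLeast S p := fun h ↦ hpm (h.unique hm)
        simp only [hnot, false_and]
        exact setSum_empty R
    · have hpm : p ≠ m := fun h ↦ hp (h ▸ hm.1)
      simp only [strictMonoOn_cycleRange_mul_iff_of_notMem hp, Set.mem_compl_iff, hp,
        not_false_eq_true, if_true, hpm, if_false, add_zero, strictMonoOnSum]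
  rw [strictMonoOnSum_compl_zero_mul, Finset.sum_congr rfl fun p _ ↦ hterm p,
    Finset.sum_add_distrib, Finset.sum_ite_eq' _ m, if_pos (Finset.mem_univ m),
    ← Finset.sum_filter, Finset.sum_const, Set.filter_mem_univ_eq_toFinset,
    Set.ncard_eq_toFinset_card']

end StrictMonoOnSum

section SideShuffle

variable (R : Type*) [Semiring R]

/-- The sum of all permutations of `Fin n` that are strictly increasing on the positions
`j, …, n - 1`: the element `D n j`, with coefficients in an arbitrary semiring. Under Bidigare's
anti-isomorphism it is the image of the `j`-th side shuffle. -/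
noncomputable def sideShuffle (n j : ℕ) : MonoidAlgebra R (Perm (Fin n)) :=
  strictMonoOnSum R {i : Fin n | j ≤ (i : ℕ)}

lemma D_eq_sideShuffle (n j : ℕ) : D n j = sideShuffle ℚ n j := by
  classical
  refine Finset.sum_congr rfl fun ρ _ ↦ ?_
  rw [Set.indicator_apply]
  refine if_congr ?_ rfl rfl
  exact ⟨fun h i hi i' _ hlt ↦ h i i' hi hlt,
    fun h i i' hi hlt ↦ h hi (hi.trans hlt.le) hlt⟩

lemma sideShuffle_zero (n : ℕ) : sideShuffle R n 0 = 1 := by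
  simp [sideShuffle, strictMonoOnSum_univ]

lemma sideShuffle_one_mul {n j : ℕ} (hj : j < n) :
    sideShuffle R n 1 * sideShuffle R n j = j * sideShuffle R n j + sideShuffle R n (j + 1) := by
  have : NeZero n := .of_gt hj
  have hone : {i : Fin n | 1 ≤ (i : ℕ)} = {0}ᶜ := by
    ext i
    simp [Nat.one_le_iff_ne_zero]
  have hleast : IsLeast {i : Fin n | j ≤ (i : ℕ)} ⟨j, hj⟩ := ⟨le_refl j, fun _ hi ↦ hi⟩
  have hcard : {i : Fin n | j ≤ (i : ℕ)}ᶜ.ncard = j := by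
    simp [Set.ncard_eq_toFinset_card', Set.compl_ofPred, Fin.card_filter_val_lt, hj.le]
  have herase : {i : Fin n | j ≤ (i : ℕ)} \ {⟨j, hj⟩} = {i : Fin n | j + 1 ≤ (i : ℕ)} := by
    ext i
    simp [Fin.ext_iff, lt_iff_le_and_ne, eq_comm]
  rw [sideShuffle, hone, sideShuffle, strictMonoOnSum_compl_zero_mul_of_isLeast R hleast, hcard,
    herase, nsmul_eq_mul, sideShuffle]

end SideShuffle

section FallingFactorial

variable (R : Type*) [Ring R] {n k : ℕ}

lemma sideShuffle_succ (hk : k < n) :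
    sideShuffle R n (k + 1) = (sideShuffle R n 1 - k) * sideShuffle R n k := by
  rw [sub_mul, sideShuffle_one_mul R hk, add_sub_cancel_left]

lemma commute_sideShuffle_one (hk : k ≤ n) :
    Commute (sideShuffle R n 1) (sideShuffle R n k) := by
  induction k with
  | zero => simp [sideShuffle_zero]
  | succ k ih =>
    rw [sideShuffle_succ R hk]
    exact ((Commute.refl _).sub_right (Nat.commute_cast _ k)).mul_right (ih (by lia))

theorem stmt_2_general (hk : k ≤ n) :
    ((List.range k).map fun m : ℕ ↦ sideShuffle R n 1 - m).prod = sideShuffle R n k := by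
  induction k with
  | zero => simp [sideShuffle_zero]
  | succ k ih =>
    have hcomm : Commute (sideShuffle R n k) (sideShuffle R n 1 - k) :=
      (commute_sideShuffle_one R (by lia)).symm.sub_right (Nat.commute_cast _ k)
    rw [List.prod_range_succ, ih (by lia), hcomm.eq, sideShuffle_succ R hk]

end FallingFactorial

/-- Falling-factorial identity: for `0 ≤ j ≤ n-2`,
`D_1·(D_1 − 1)·(D_1 − 2)···(D_1 − j) = D_{j+1}` in `ℚ[S_n]`, integers denoting
scalar multiples of the identity of the group algebra. -/
theorem stmt_2 (n : ℕ) (hn : 2 ≤ n) (j : ℕ) (hj : j ≤ n - 2) :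
    ((List.range (j + 1)).map
      (fun m => D n 1 - (m : MonoidAlgebra ℚ (Equiv.Perm (Fin n))))).prod
      = D n (j + 1) := by
  -- The ascription on `m` coerces the whole list `List.range (j + 1)`, whence the `flatMap`.
  simpa [D_eq_sideShuffle, ← List.map_eq_flatMap, Function.comp_def] using
    stmt_2_general ℚ (n := n) (k := j + 1) (by lia)
end

section
/- Let H_n be the hyperoctahedral group of signed permutations, realized as the group of permutations π of {1,…,n} × {+1,−1} satisfying π(i,−s) = −π(i,s) (where −(p,t) := (p,−t)), and let H_n^+ ≤ H_n be the subgroup of even signed permutations (those flipping an even number of signs). For each p ∈ {1,…,n} and ε ∈ {+1,−1} let ρ_{p,ε} ∈ H_n^+ be the element whose underlying permutation of positions sends p to 1, sends i to i+1 for i < p, and fixes i for i > p, and whose sign changes are: none if ε = +1, and flips exactly at the two points mapped to positions 1 and n if ε = −1. Set F_1 := Σ_{p=1}^{n} Σ_{ε ∈ {+1,−1}} ρ_{p,ε} ∈ ℚ[H_n^+]. Then for n ≥ 2 one has F_1·(F_1 − 2)·(F_1 − 4)···(F_1 − (2n−4))·(F_1 − 2n) = 0 in ℚ[H_n^+], i.e.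 the product of the factors (F_1 − 2m) over m ∈ {0,1,…,n−2,n} vanishes (the factor (F_1 − (2n−2)) is absent). -/
/-!
Call an even signed deck sorted from position `k` if its labels increase from position `k` on and
all its signs from there on, except possibly the bottom one, are positive; let `F_k` be the sum of
these decks, so that `F_0 = 1`. Moving a card above position `k` to the top permutes these decks,
while moving a card from position `k` or below yields each deck sorted from position `k + 1` exactly
once, because its top card can be reinserted among the sorted ones in a single way. Hence
`(F_1 - 2k) F_k = F_{k+1}` for `k ≤ n - 2`. Every even deck is sorted from the bottom position
`n - 1`, so `F_{n-1}` is the sum of the whole group `H_n⁺` and `(F_1 - 2n) F_{n-1} = 0`.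
-/

section CommutingProducts

variable {A : Type*} [Monoid A] {f : ℕ → A}

theorem commute_prod_map_range (hf : ∀ i j, Commute (f i) (f j)) (m j : ℕ) :
    Commute ((List.range m).map f).prod (f j) :=
  Commute.list_prod_left _ _ fun y hy => by
    obtain ⟨i, -, rfl⟩ := List.mem_map.1 hy
    exact hf i j

theorem prod_map_range_eq_of_mul_eq_succ (hf : ∀ i j, Commute (f i) (f j)) {e : ℕ → A}
    (he : e 0 = 1) {m : ℕ} (hstep : ∀ k < m, f k * e k = e (k + 1)) :
    ((List.range m).map f).prod = e m := by
  induction m with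
  | zero => simp [he]
  | succ m ih =>
    rw [List.prod_range_succ, (commute_prod_map_range hf m m).eq,
      ih fun k hk => hstep k (hk.trans m.lt_succ_self), hstep m m.lt_succ_self]

end CommutingProducts

section GroupAlgebraSums

variable {R G : Type*} [Semiring R] [Monoid G]

theorem sum_of_mul_sum_of {ι : Type*} {f : ι → G} {s : Finset ι} {B C : Finset G}
    (h : Set.BijOn (fun x : ι × G => f x.1 * x.2) ↑(s ×ˢ B) ↑C) :
    (∑ i ∈ s, MonoidAlgebra.of R G (f i)) * ∑ g ∈ B, MonoidAlgebra.of R G g =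
      ∑ g ∈ C, MonoidAlgebra.of R G g := by
  rw [Finset.sum_mul_sum, ← Finset.sum_product']
  exact Finset.sum_nbij _ h.mapsTo h.injOn h.surjOn fun _ _ => (map_mul _ _ _).symm

theorem of_mul_sum_of [IsLeftCancelMul G] {a : G} {B : Finset G} (h : ∀ g ∈ B, a * g ∈ B) :
    MonoidAlgebra.of R G a * ∑ g ∈ B, MonoidAlgebra.of R G g =
      ∑ g ∈ B, MonoidAlgebra.of R G g := by
  have hB : B.map (mulLeftEmbedding a) = B :=
    Finset.map_eq_of_subset fun x hx => by
      obtain ⟨g, hg, rfl⟩ := Finset.mem_map.1 hx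
      exact h g hg
  conv_rhs => rw [← hB]
  simp [Finset.mul_sum]

end GroupAlgebraSums

section Insertion

theorem eq_cycleRange {n : ℕ} {σ : Fin n → Fin n} {p : Fin n} (heq : σ p = ⟨0, p.pos⟩)
    (hlt : ∀ (x : Fin n) (h : (x : ℕ) < (p : ℕ)), σ x = ⟨(x : ℕ) + 1, lt_of_le_of_lt h p.isLt⟩)
    (hgt : ∀ x : Fin n, (p : ℕ) < (x : ℕ) → σ x = x) : σ = p.cycleRange := by
  have : NeZero n := ⟨p.pos.ne'⟩
  funext x
  rcases lt_trichotomy x p with h | rfl | h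
  · exact (hlt x h).trans (Fin.ext (Fin.coe_cycleRange_of_lt h).symm)
  · exact heq.trans (Fin.cycleRange_self x).symm
  · exact (hgt x h).trans (Fin.cycleRange_of_gt h).symm

variable {m k : ℕ}

theorem le_val_succAbove_iff {p : Fin (m + 1)} (hkp : k ≤ p) (j : Fin m) :
    k ≤ (p.succAbove j : ℕ) ↔ k ≤ (j : ℕ) := by
  rcases lt_or_ge j.castSucc p with hj | hj
  · rw [Fin.succAbove_of_castSucc_lt _ _ hj, Fin.val_castSucc]
  · have hpj : (p : ℕ) ≤ j := hj
    rw [Fin.succAbove_of_le_castSucc _ _ hj, Fin.val_succ]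
    omega

theorem existsUnique_forall_castSucc_lt_iff (hk : k ≤ m) {P : Fin m → Prop}
    (hP : ∀ i j : Fin m, k ≤ (i : ℕ) → i ≤ j → P j → P i) :
    ∃! p : Fin (m + 1), k ≤ (p : ℕ) ∧ ∀ j : Fin m, k ≤ (j : ℕ) → (j.castSucc < p ↔ P j) := by
  classical
  refine existsUnique_of_exists_of_unique ?_ fun p q hp hq => ?_
  · have hm : k ≤ m ∧ ∀ j : Fin m, m ≤ j → ¬ P j := ⟨hk, fun j hj => absurd j.isLt hj.not_gt⟩
    have hex : ∃ q, k ≤ q ∧ ∀ j : Fin m, q ≤ j → ¬ P j := ⟨m, hm⟩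
    obtain ⟨hkq, hq⟩ := Nat.find_spec hex
    refine ⟨⟨Nat.find hex, Nat.lt_succ_of_le (Nat.find_min' hex hm)⟩, hkq, fun j hj =>
      ⟨fun hjq => ?_, fun hPj => lt_of_not_ge fun hle => hq j hle hPj⟩⟩
    have hmin := Nat.find_min hex hjq
    push Not at hmin
    obtain ⟨i, hji, hPi⟩ := hmin hj
    exact hP j i hj hji hPi
  · have hle {p q : Fin (m + 1)} (hkp : k ≤ (p : ℕ))
        (hpq : ∀ j : Fin m, k ≤ (j : ℕ) → (j.castSucc < p ↔ j.castSucc < q)) : q ≤ p := by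
      by_contra! hlt
      exact lt_irrefl p ((hpq ⟨p, hlt.trans_le q.le_last⟩ hkp).2 hlt)
    exact le_antisymm (hle hq.1 fun j hj => (hq.2 j hj).trans (hp.2 j hj).symm)
      (hle hp.1 fun j hj => (hp.2 j hj).trans (hq.2 j hj).symm)

variable {α : Type*} [LinearOrder α] {f : Fin (m + 1) → α}

theorem strictMonoOn_comp_cycleRange_iff {p : Fin (m + 1)} (hkp : k ≤ p) (hinj : f.Injective)
    (hf : StrictMonoOn f {i | k + 1 ≤ (i : ℕ)}) :
    StrictMonoOn (f ∘ p.cycleRange) {i | k ≤ (i : ℕ)} ↔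
      ∀ j : Fin m, k ≤ (j : ℕ) → (j.castSucc < p ↔ f j.succ < f 0) := by
  have hk (j : Fin m) := le_val_succAbove_iff hkp j
  constructor
  · intro h j hj
    rw [← Fin.succAbove_lt_iff_castSucc_lt]
    simpa using (h.lt_iff_lt ((hk j).2 hj) hkp).symm
  · intro h i hi j hj hij
    cases i using p.succAboveCases with
    | x =>
      cases j using p.succAboveCases with
      | x => exact absurd hij (lt_irrefl _)
      | p j =>
        have hle : f 0 ≤ f j.succ := not_lt.1 <| mt (h j ((hk j).1 hj)).2 <|
          not_lt.2 ((Fin.lt_succAbove_iff_le_castSucc p j).1 hij)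
        simpa using hle.lt_of_ne (hinj.ne (Fin.succ_ne_zero j).symm)
    | p i =>
      have hki : k ≤ i := (hk i).1 hi
      cases j using p.succAboveCases with
      | x => simpa using (h i hki).1 ((Fin.succAbove_lt_iff_castSucc_lt p i).1 hij)
      | p j =>
        simpa using hf (Nat.succ_le_succ hki) (Nat.succ_le_succ ((hk j).1 hj))
          (Fin.succ_lt_succ_iff.2 (Fin.succAbove_lt_succAbove_iff.1 hij))

theorem existsUnique_strictMonoOn_comp_cycleRange (hk : k ≤ m) (hinj : f.Injective)
    (hf : StrictMonoOn f {i | k + 1 ≤ (i : ℕ)}) :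
    ∃! p : Fin (m + 1), k ≤ (p : ℕ) ∧ StrictMonoOn (f ∘ p.cycleRange) {i | k ≤ (i : ℕ)} := by
  have hanti (i j : Fin m) (hi : k ≤ (i : ℕ)) (hij : i ≤ j) (hj : f j.succ < f 0) :
      f i.succ < f 0 :=
    (hf.monotoneOn (Nat.succ_le_succ hi) (Nat.succ_le_succ (hi.trans hij))
      (Fin.succ_le_succ_iff.2 hij)).trans_lt hj
  refine (existsUnique_congr fun p => and_congr_right fun hkp => ?_).1
    (existsUnique_forall_castSucc_lt_iff hk hanti)
  exact (strictMonoOn_comp_cycleRange_iff hkp hinj hf).symm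

end Insertion

/-- The group of signed permutations of `α`: `right` is the underlying permutation of positions,
and `left i` is the sign attached to whatever is moved to position `i`. -/
abbrev SignedPerm (α : Type*) : Type _ := (α → ℤˣ) ⋊[mulAutArrow] Equiv.Perm α

namespace SignedPerm

section Basic

variable {α : Type*}

instance [Finite α] : Finite (SignedPerm α) :=
  Finite.of_equiv _ SemidirectProduct.equivProd.symm

theorem mul_left_apply (g h : SignedPerm α) (i : α) :
    (g * h).left i = g.left i * h.left (g.right.symm i) := rfl

/-- The realization of signed permutations as permutations of `α × {±1}` commuting with the
negation of signs. -/
def toPerm : SignedPerm α →* Equiv.Perm (α × ℤˣ) :=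
  letI : MulAction (SignedPerm α) (α × ℤˣ) :=
    { smul := fun g x => (g.right x.1, g.left (g.right x.1) * x.2)
      one_smul := fun x => by ext <;> simp [HSMul.hSMul]
      mul_smul := fun g h x => by ext <;> simp [HSMul.hSMul, mul_left_apply, mul_assoc] }
  MulAction.toPermHom _ _

theorem toPerm_apply (g : SignedPerm α) (i : α) (s : ℤˣ) :
    toPerm g (i, s) = (g.right i, g.left (g.right i) * s) := rfl

/-- The parity of the number of sign flips. Its kernel is the group of even signed permutations,
the Coxeter group of type `D`. -/
def flipParity [Fintype α] : SignedPerm α →* ℤˣ where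
  toFun g := ∏ i, g.left i
  map_one' := by simp
  map_mul' g h := by
    simp only [mul_left_apply, Finset.prod_mul_distrib, Equiv.prod_comp g.right.symm h.left]

theorem flipParity_apply [Fintype α] (g : SignedPerm α) : flipParity g = ∏ i, g.left i := rfl

end Basic

variable {n k : ℕ}

/-- The sign pattern with `ε` at the top position `0` and at the bottom position, and `1`
elsewhere. -/
def endpointSign (ε : ℤˣ) : Fin (n + 2) → ℤˣ :=
  Pi.mulSingle 0 ε * Pi.mulSingle (Fin.last (n + 1)) ε

theorem endpointSign_zero (ε : ℤˣ) : endpointSign ε (0 : Fin (n + 2)) = ε := by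
  simp [endpointSign, Fin.ext_iff]

theorem endpointSign_last (ε : ℤˣ) : endpointSign ε (Fin.last (n + 1)) = ε := by
  simp [endpointSign, Fin.ext_iff]

theorem endpointSign_of_ne (ε : ℤˣ) {i : Fin (n + 2)} (h0 : i ≠ 0) (hl : i ≠ Fin.last (n + 1)) :
    endpointSign ε i = 1 := by
  simp [endpointSign, h0, hl]

theorem endpointSign_mul (ε s : ℤˣ) (i : Fin (n + 2)) :
    endpointSign ε i * s = if ε = -1 ∧ ((i : ℕ) = 0 ∨ (i : ℕ) = n + 1) then -s else s := by
  have hε : ε * s = if ε = -1 then -s else s := by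
    rcases Int.units_eq_one_or ε with rfl | rfl <;> simp
  by_cases h0 : i = 0
  · simp [h0, endpointSign_zero, hε]
  by_cases hl : i = Fin.last (n + 1)
  · simp [hl, endpointSign_last, hε]
  · have hl' : (i : ℕ) ≠ n + 1 := fun h => hl (Fin.ext h)
    simp [endpointSign_of_ne ε h0 hl, h0, hl']

theorem prod_endpointSign (ε : ℤˣ) : ∏ i : Fin (n + 2), endpointSign ε i = 1 := by
  simp [endpointSign, Finset.prod_mul_distrib, Int.units_mul_self]

/-- The element `ρ_{p,ε}`: move the card in position `p` to the top with sign `ε`, and correct the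
sign of the bottom card. -/
def moveToTop (p : Fin (n + 2)) (ε : ℤˣ) : SignedPerm (Fin (n + 2)) :=
  ⟨endpointSign ε, p.cycleRange⟩

theorem toPerm_moveToTop_apply (p : Fin (n + 2)) (ε : ℤˣ) (x : Fin (n + 2)) (s : ℤˣ) :
    toPerm (moveToTop p ε) (x, s) = (p.cycleRange x,
      if ε = -1 ∧ ((p.cycleRange x : ℕ) = 0 ∨ (p.cycleRange x : ℕ) = n + 1) then -s else s) := by
  rw [← endpointSign_mul, toPerm_apply, moveToTop]

theorem flipParity_moveToTop (p : Fin (n + 2)) (ε : ℤˣ) : flipParity (moveToTop p ε) = 1 :=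
  prod_endpointSign ε

theorem moveToTop_mul_left (p : Fin (n + 2)) (ε : ℤˣ) (g : SignedPerm (Fin (n + 2)))
    (i : Fin (n + 2)) :
    (moveToTop p ε * g).left i = endpointSign ε i * g.left (p.cycleRange.symm i) := rfl

theorem moveToTop_mul_right_symm (p : Fin (n + 2)) (ε : ℤˣ) (g : SignedPerm (Fin (n + 2)))
    (i : Fin (n + 2)) :
    (moveToTop p ε * g).right.symm i = g.right.symm (p.cycleRange.symm i) := rfl

/-- The even signed decks whose cards from position `k` on are in increasing order and, apart from
the bottom one, unflipped. The deck of `g` has card `g.right.symm i` with sign `g.left i` in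
position `i`. -/
structure SortedFrom (k : ℕ) (g : SignedPerm (Fin (n + 2))) : Prop where
  flipParity_eq_one : flipParity g = 1
  strictMonoOn : StrictMonoOn g.right.symm {i | k ≤ (i : ℕ)}
  left_eq_one : ∀ i : Fin (n + 2), k ≤ (i : ℕ) → i ≠ Fin.last (n + 1) → g.left i = 1

theorem sortedFrom_zero_iff {g : SignedPerm (Fin (n + 2))} : SortedFrom 0 g ↔ g = 1 := by
  refine ⟨fun h => ?_, ?_⟩
  · have hmono : StrictMono g.right.symm := fun i j =>
      h.strictMonoOn (Nat.zero_le _) (Nat.zero_le _)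
    have hright : g.right.symm = 1 :=
      Equiv.ext fun i => le_antisymm hmono.apply_le hmono.le_apply
    have hinit (i : Fin (n + 1)) : g.left i.castSucc = 1 :=
      h.left_eq_one _ (Nat.zero_le _) (Fin.castSucc_ne_last i)
    have hlast : g.left (Fin.last (n + 1)) = 1 := by
      simpa [flipParity_apply, Fin.prod_univ_castSucc, hinit] using h.flipParity_eq_one
    exact SemidirectProduct.ext (funext (Fin.lastCases hlast hinit)) (inv_eq_one.1 hright)
  · rintro rfl
    exact ⟨map_one _, strictMono_id.strictMonoOn _, fun _ _ _ => rfl⟩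

theorem sortedFrom_last_iff {g : SignedPerm (Fin (n + 2))} :
    SortedFrom (n + 1) g ↔ flipParity g = 1 := by
  have hlast (i : Fin (n + 2)) (hi : n + 1 ≤ (i : ℕ)) : i = Fin.last (n + 1) :=
    Fin.last_le_iff.1 hi
  refine ⟨SortedFrom.flipParity_eq_one, fun h => ⟨h, fun i hi j hj hij => ?_, fun i hi hil => ?_⟩⟩
  · exact absurd ((hlast i hi).trans (hlast j hj).symm) hij.ne
  · exact absurd (hlast i hi) hil

theorem SortedFrom.moveToTop_mul_of_lt {g : SignedPerm (Fin (n + 2))} (hg : SortedFrom k g)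
    {p : Fin (n + 2)} (hp : (p : ℕ) < k) (ε : ℤˣ) : SortedFrom k (moveToTop p ε * g) := by
  have hfix (i : Fin (n + 2)) (hi : k ≤ (i : ℕ)) : p.cycleRange.symm i = i :=
    (Equiv.symm_apply_eq _).2 (Fin.cycleRange_of_gt (hp.trans_le hi)).symm
  refine ⟨?_, fun i hi j hj hij => ?_, fun i hi hil => ?_⟩
  · rw [map_mul, flipParity_moveToTop, hg.flipParity_eq_one, one_mul]
  · rw [moveToTop_mul_right_symm, moveToTop_mul_right_symm, hfix i hi, hfix j hj]
    exact hg.strictMonoOn hi hj hij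
  · have hi0 : i ≠ 0 := Fin.pos_iff_ne_zero.1 ((Nat.zero_le _).trans_lt (hp.trans_le hi))
    rw [moveToTop_mul_left, hfix i hi, hg.left_eq_one i hi hil, endpointSign_of_ne ε hi0 hil,
      one_mul]

theorem SortedFrom.moveToTop_mul_of_le {g : SignedPerm (Fin (n + 2))} (hg : SortedFrom k g)
    {p : Fin (n + 2)} (hp : k ≤ (p : ℕ)) (ε : ℤˣ) : SortedFrom (k + 1) (moveToTop p ε * g) := by
  have hsucc {i : Fin (n + 2)} (hi : k + 1 ≤ (i : ℕ)) :
      ∃ j : Fin (n + 1), j.succ = i ∧ k ≤ (p.succAbove j : ℕ) := by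
    obtain ⟨j, rfl⟩ := Fin.exists_succ_eq.2 (Fin.pos_iff_ne_zero.1 (Nat.zero_lt_of_lt hi))
    exact ⟨j, rfl, (le_val_succAbove_iff hp j).2 (Nat.le_of_succ_le_succ hi)⟩
  refine ⟨?_, fun i hi j hj hij => ?_, fun i hi hil => ?_⟩
  · rw [map_mul, flipParity_moveToTop, hg.flipParity_eq_one, one_mul]
  · obtain ⟨i, rfl, hki⟩ := hsucc hi
    obtain ⟨j, rfl, hkj⟩ := hsucc hj
    rw [moveToTop_mul_right_symm, moveToTop_mul_right_symm, Fin.cycleRange_symm_succ,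
      Fin.cycleRange_symm_succ]
    exact hg.strictMonoOn hki hkj
      (Fin.succAbove_lt_succAbove_iff.2 (Fin.succ_lt_succ_iff.1 hij))
  · obtain ⟨i, rfl, hki⟩ := hsucc hi
    have hle : p.succAbove i ≤ i.succ := by
      rw [Fin.succAbove]
      split_ifs
      exacts [Fin.castSucc_le_succ i, le_rfl]
    have hlast : p.succAbove i ≠ Fin.last (n + 1) :=
      (hle.trans_lt (Fin.lt_last_iff_ne_last.2 hil)).ne
    rw [moveToTop_mul_left, endpointSign_of_ne ε (Fin.succ_ne_zero i) hil,
      Fin.cycleRange_symm_succ, hg.left_eq_one _ hki hlast, one_mul]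

-- The sign `ε` is read off the endpoint that the bottom card does not move to.
theorem existsUnique_endpointSign_cycleRange (hk : k ≤ n) {u : Fin (n + 2) → ℤˣ}
    (hu : ∀ i : Fin (n + 2), k + 1 ≤ (i : ℕ) → i ≠ Fin.last (n + 1) → u i = 1)
    {p : Fin (n + 2)} (hp : k ≤ (p : ℕ)) :
    ∃! ε, ∀ i : Fin (n + 2), k ≤ (i : ℕ) → i ≠ Fin.last (n + 1) →
      endpointSign ε (p.cycleRange i) = u (p.cycleRange i) := by
  have hsucc (ε : ℤˣ) (j : Fin (n + 1)) (hkj : k ≤ (j : ℕ)) (hj : j.succ ≠ Fin.last (n + 1)) :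
      endpointSign ε j.succ = u j.succ := by
    rw [endpointSign_of_ne ε (Fin.succ_ne_zero j) hj, hu _ (Nat.succ_le_succ hkj) hj]
  by_cases hpl : p = Fin.last (n + 1)
  · subst hpl
    have hcycle (j : Fin (n + 1)) : (Fin.last (n + 1)).cycleRange j.castSucc = j.succ := by
      rw [← Fin.succAbove_last_apply, Fin.cycleRange_succAbove]
    refine ⟨u (Fin.last (n + 1)), fun i hi hil => ?_, fun ε hε => ?_⟩
    · obtain ⟨j, rfl⟩ := Fin.exists_castSucc_eq.2 hil
      rw [hcycle]
      by_cases hjl : j.succ = Fin.last (n + 1)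
      · rw [hjl, endpointSign_last]
      · exact hsucc _ j hi hjl
    · have hpenult := hε (Fin.last n).castSucc hk (Fin.castSucc_ne_last _)
      rwa [hcycle, Fin.succ_last, endpointSign_last] at hpenult
  · refine ⟨u 0, fun i hi hil => ?_, fun ε hε => ?_⟩
    · cases i using p.succAboveCases with
      | x => rw [Fin.cycleRange_self, endpointSign_zero]
      | p j =>
        have hjl : j.succ ≠ Fin.last (n + 1) := by
          intro hj
          rw [Fin.succ_eq_last_succ.1 hj, Fin.succAbove_ne_last_last hpl] at hil
          exact hil rfl
        rw [Fin.cycleRange_succAbove]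
        exact hsucc _ j ((le_val_succAbove_iff hp j).1 hi) hjl
    · simpa only [Fin.cycleRange_self, endpointSign_zero] using hε p hp hpl

theorem sortedFrom_moveToTop_inv_mul_iff {h : SignedPerm (Fin (n + 2))} (hh : flipParity h = 1)
    (p : Fin (n + 2)) (ε : ℤˣ) :
    SortedFrom k ((moveToTop p ε)⁻¹ * h) ↔
      StrictMonoOn (h.right.symm ∘ p.cycleRange) {i | k ≤ (i : ℕ)} ∧
        ∀ i : Fin (n + 2), k ≤ (i : ℕ) → i ≠ Fin.last (n + 1) →
          endpointSign ε (p.cycleRange i) = h.left (p.cycleRange i) := by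
  have hleft (i : Fin (n + 2)) : ((moveToTop p ε)⁻¹ * h).left i = 1 ↔
      endpointSign ε (p.cycleRange i) = h.left (p.cycleRange i) := inv_mul_eq_one
  have hparity : flipParity ((moveToTop p ε)⁻¹ * h) = 1 := by
    rw [map_mul, map_inv, flipParity_moveToTop, hh, inv_one, one_mul]
  simp only [← hleft]
  exact ⟨fun hs => ⟨hs.strictMonoOn, hs.left_eq_one⟩, fun hs => ⟨hparity, hs.1, hs.2⟩⟩

theorem SortedFrom.existsUnique_moveToTop_inv_mul (hk : k ≤ n) {h : SignedPerm (Fin (n + 2))}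
    (hh : SortedFrom (k + 1) h) :
    ∃! x : Fin (n + 2) × ℤˣ, k ≤ (x.1 : ℕ) ∧ SortedFrom k ((moveToTop x.1 x.2)⁻¹ * h) := by
  simp only [sortedFrom_moveToTop_inv_mul_iff hh.flipParity_eq_one]
  obtain ⟨p, ⟨hkp, hp⟩, hp_unique⟩ := existsUnique_strictMonoOn_comp_cycleRange
    (hk.trans n.le_succ) h.right.symm.injective hh.strictMonoOn
  obtain ⟨ε, hε, hε_unique⟩ := existsUnique_endpointSign_cycleRange hk hh.left_eq_one hkp
  refine ⟨(p, ε), ⟨hkp, hp, hε⟩, ?_⟩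
  rintro ⟨p', ε'⟩ ⟨hkp', hp', hε'⟩
  obtain rfl : p' = p := hp_unique p' ⟨hkp', hp'⟩
  rw [hε_unique ε' hε']

/-- The finite set of decks sorted from position `k`, in which the sums `F_k` are taken. -/
noncomputable def sortedFinset (n k : ℕ) : Finset (SignedPerm (Fin (n + 2))) :=
  (Set.toFinite {g | SortedFrom k g}).toFinset

theorem mem_sortedFinset {g : SignedPerm (Fin (n + 2))} :
    g ∈ sortedFinset n k ↔ SortedFrom k g := by
  simp [sortedFinset]

theorem bijOn_moveToTop_mul (hk : k ≤ n) :
    Set.BijOn (fun x : (Fin (n + 2) × ℤˣ) × SignedPerm (Fin (n + 2)) =>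
        moveToTop x.1.1 x.1.2 * x.2)
      ↑(({x | k ≤ (x.1 : ℕ)} : Finset (Fin (n + 2) × ℤˣ)) ×ˢ sortedFinset n k)
      ↑(sortedFinset n (k + 1)) := by
  simp only [Finset.coe_product, Finset.coe_filter, Finset.mem_univ, true_and]
  refine ⟨fun x hx => ?_, fun x hx y hy hxy => ?_, fun h hh => ?_⟩
  · exact mem_sortedFinset.2 ((mem_sortedFinset.1 hx.2).moveToTop_mul_of_le hx.1 _)
  · replace hxy : moveToTop x.1.1 x.1.2 * x.2 = moveToTop y.1.1 y.1.2 * y.2 := hxy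
    have hsorted := (mem_sortedFinset.1 hx.2).moveToTop_mul_of_le hx.1 x.1.2
    have hfst : x.1 = y.1 := by
      refine (hsorted.existsUnique_moveToTop_inv_mul hk).unique ⟨hx.1, ?_⟩ ⟨hy.1, ?_⟩
      · rw [inv_mul_cancel_left]
        exact mem_sortedFinset.1 hx.2
      · rw [hxy, inv_mul_cancel_left]
        exact mem_sortedFinset.1 hy.2
    refine Prod.ext hfst (mul_left_cancel (a := moveToTop x.1.1 x.1.2) ?_)
    simpa only [hfst] using hxy
  · obtain ⟨x, ⟨hkx, hx⟩, -⟩ := (mem_sortedFinset.1 hh).existsUnique_moveToTop_inv_mul hk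
    exact ⟨(x, (moveToTop x.1 x.2)⁻¹ * h), ⟨hkx, mem_sortedFinset.2 hx⟩,
      mul_inv_cancel_left _ _⟩

section SortedSums

variable (R : Type*) [Semiring R]

/-- The side shuffle `F_1 = ∑ ρ_{p,ε}` of a deck of `n + 2` cards, in the group algebra. -/
noncomputable def sideShuffle (n : ℕ) : MonoidAlgebra R (SignedPerm (Fin (n + 2))) :=
  ∑ x : Fin (n + 2) × ℤˣ, MonoidAlgebra.of R _ (moveToTop x.1 x.2)

/-- The sum `F_k` of all decks sorted from position `k`. -/
noncomputable def sortedSum (n k : ℕ) : MonoidAlgebra R (SignedPerm (Fin (n + 2))) :=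
  ∑ g ∈ sortedFinset n k, MonoidAlgebra.of R _ g

theorem sortedSum_zero : sortedSum R n 0 = 1 := by
  have hsingleton : sortedFinset n 0 = {1} := by
    ext g
    rw [mem_sortedFinset, sortedFrom_zero_iff, Finset.mem_singleton]
  rw [sortedSum, hsingleton, Finset.sum_singleton, map_one]

theorem sum_of_moveToTop_lt_mul_sortedSum (hk : k ≤ n) :
    (∑ x : Fin (n + 2) × ℤˣ with (x.1 : ℕ) < k, MonoidAlgebra.of R _ (moveToTop x.1 x.2)) *
      sortedSum R n k = ((2 * k : ℕ) : MonoidAlgebra R _) * sortedSum R n k := by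
  have hinv (x : Fin (n + 2) × ℤˣ) (hx : x ∈ Finset.univ.filter fun x => (x.1 : ℕ) < k) :
      MonoidAlgebra.of R _ (moveToTop x.1 x.2) * sortedSum R n k = sortedSum R n k :=
    of_mul_sum_of fun g hg => mem_sortedFinset.2 <|
      (mem_sortedFinset.1 hg).moveToTop_mul_of_lt (Finset.mem_filter.1 hx).2 _
  have hcard : (Finset.univ.filter fun x : Fin (n + 2) × ℤˣ => (x.1 : ℕ) < k).card = 2 * k := by
    rw [← Finset.univ_product_univ, Finset.filter_product_left fun p : Fin (n + 2) => (p : ℕ) < k,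
      Finset.card_product, Fin.card_filter_val_lt, min_eq_right (by omega), mul_comm,
      Finset.card_univ, Fintype.card_units_int]
  rw [Finset.sum_mul, Finset.sum_congr rfl hinv, Finset.sum_const, hcard, nsmul_eq_mul]

end SortedSums

section SideShuffle

variable (R : Type*) [Ring R]

theorem sideShuffle_sub_mul_sortedSum (hk : k ≤ n) :
    (sideShuffle R n - ((2 * k : ℕ) : MonoidAlgebra R _)) * sortedSum R n k =
      sortedSum R n (k + 1) := by
  rw [sub_mul, sub_eq_iff_eq_add', sideShuffle,
    ← Finset.sum_filter_add_sum_filter_not _ fun x : Fin (n + 2) × ℤˣ => (x.1 : ℕ) < k, add_mul,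
    sum_of_moveToTop_lt_mul_sortedSum R hk]
  simp only [not_lt]
  exact congrArg _ (sum_of_mul_sum_of (bijOn_moveToTop_mul hk))

theorem sideShuffle_sub_mul_sortedSum_last (n : ℕ) :
    (sideShuffle R n - ((2 * (n + 2) : ℕ) : MonoidAlgebra R _)) * sortedSum R n (n + 1) = 0 := by
  have hinv (x : Fin (n + 2) × ℤˣ) :
      MonoidAlgebra.of R _ (moveToTop x.1 x.2) * sortedSum R n (n + 1) = sortedSum R n (n + 1) :=
    of_mul_sum_of fun g hg => by
      rw [mem_sortedFinset, sortedFrom_last_iff] at hg ⊢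
      rw [map_mul, flipParity_moveToTop, hg, one_mul]
  rw [sub_mul, sub_eq_zero, sideShuffle, Finset.sum_mul, Finset.sum_congr rfl fun x _ => hinv x,
    Finset.sum_const, Finset.card_univ, Fintype.card_prod, Fintype.card_fin,
    Fintype.card_units_int, mul_comm, nsmul_eq_mul]

theorem prod_sideShuffle_sub_mul_eq_zero (n : ℕ) :
    ((List.range (n + 1)).map fun m =>
        sideShuffle R n - ((2 * m : ℕ) : MonoidAlgebra R _)).prod *
      (sideShuffle R n - ((2 * (n + 2) : ℕ) : MonoidAlgebra R _)) = 0 := by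
  have hcomm (i j : ℕ) : Commute (sideShuffle R n - ((2 * i : ℕ) : MonoidAlgebra R _))
      (sideShuffle R n - ((2 * j : ℕ) : MonoidAlgebra R _)) :=
    ((Commute.refl _).sub_right (Nat.cast_commute _ _).symm).sub_left (Nat.cast_commute _ _)
  rw [(commute_prod_map_range hcomm (n + 1) (n + 2)).eq,
    prod_map_range_eq_of_mul_eq_succ hcomm (sortedSum_zero R) fun k hk =>
      sideShuffle_sub_mul_sortedSum R (Nat.le_of_lt_succ hk)]
  exact sideShuffle_sub_mul_sortedSum_last R n

end SideShuffle

end SignedPerm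

theorem stmt_14_general (R : Type*) [Ring R] (n : ℕ) (hn : 2 ≤ n)
    (τ : Fin n → Fin n → Fin n)
    (hτeq : ∀ p : Fin n, τ p p = ⟨0, p.pos⟩)
    (hτlt : ∀ (p x : Fin n) (h : (x : ℕ) < (p : ℕ)),
      τ p x = ⟨(x : ℕ) + 1, lt_of_le_of_lt h p.isLt⟩)
    (hτgt : ∀ p x : Fin n, (p : ℕ) < (x : ℕ) → τ p x = x)
    (ρ : Fin n → ℤˣ → Equiv.Perm (Fin n × ℤˣ))
    (hρ : ∀ (p : Fin n) (ε : ℤˣ) (x : Fin n) (s : ℤˣ),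
      ρ p ε (x, s) =
        (τ p x,
          if ε = -1 ∧ ((τ p x : ℕ) = 0 ∨ (τ p x : ℕ) = n - 1) then -s else s)) :
    ((List.range (n - 1)).map
      (fun m => (∑ p : Fin n, ∑ ε : ℤˣ,
          MonoidAlgebra.of R (Equiv.Perm (Fin n × ℤˣ)) (ρ p ε))
        - ((2 * m : ℕ) : MonoidAlgebra R (Equiv.Perm (Fin n × ℤˣ))))).prod *
      ((∑ p : Fin n, ∑ ε : ℤˣ,
          MonoidAlgebra.of R (Equiv.Perm (Fin n × ℤˣ)) (ρ p ε))
        - ((2 * n : ℕ) : MonoidAlgebra R (Equiv.Perm (Fin n × ℤˣ)))) = 0 := by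
  obtain ⟨m, rfl⟩ := Nat.exists_eq_add_of_le' hn
  have hτ (p : Fin (m + 2)) : τ p = p.cycleRange :=
    eq_cycleRange (hτeq p) (hτlt p) (hτgt p)
  have hρ_toPerm (p : Fin (m + 2)) (ε : ℤˣ) :
      ρ p ε = SignedPerm.toPerm (SignedPerm.moveToTop p ε) :=
    Equiv.ext fun ⟨x, s⟩ => by rw [hρ, hτ, SignedPerm.toPerm_moveToTop_apply]; rfl
  have hmap : MonoidAlgebra.mapDomainRingHom R SignedPerm.toPerm (SignedPerm.sideShuffle R m) =
      ∑ p, ∑ ε, MonoidAlgebra.of R _ (ρ p ε) := by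
    simp only [SignedPerm.sideShuffle, map_sum, Fintype.sum_prod_type, hρ_toPerm,
      MonoidAlgebra.of_apply, MonoidAlgebra.mapDomainRingHom_apply, MonoidAlgebra.mapDomain_single]
  have hzero := congrArg (MonoidAlgebra.mapDomainRingHom R SignedPerm.toPerm)
    (SignedPerm.prod_sideShuffle_sub_mul_eq_zero R m)
  simpa only [map_mul, map_list_prod, List.map_map, Function.comp_def, map_sub, map_natCast,
    map_zero, hmap, Nat.add_succ_sub_one] using hzero

/-- Type `D_n` side shuffle.  Signed permutations are realized inside the permutations
of `Fin n × ℤˣ` (positions `{1,…,n}`, 0-indexed, times signs `{+1,−1}`).  For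
`p : Fin n`, `τ p` is the underlying permutation of positions sending `p` to the top
(0-indexed position `0`), `i` to `i+1` for `i < p`, and fixing `i` for `i > p`.  The
element `ρ p ε` acts on `(x, s)` by applying `τ p` to the position and flipping the
sign exactly at the two points mapped to the top and bottom positions (`0` and `n-1`)
when `ε = −1`, and flipping no signs when `ε = +1`; these are even signed permutations,
i.e. elements of `H_n⁺`.  With `F_1 := Σ_p Σ_ε ρ_{p,ε}` in the group algebra, for
`n ≥ 2` one has `F_1·(F_1 − 2)·(F_1 − 4)···(F_1 − (2n−4))·(F_1 − 2n) = 0`, i.e. the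
product of the factors `(F_1 − 2m)` over `m ∈ {0,1,…,n−2,n}` vanishes (the factor
`(F_1 − (2n−2))` is absent; integers denote scalar multiples of the identity; the
identity holds equivalently in `ℚ[H_n⁺]` since `ℚ[H_n⁺]` embeds in the group algebra
used here). -/
theorem stmt_14 (n : ℕ) (hn : 2 ≤ n)
    (τ : Fin n → Fin n → Fin n)
    (hτeq : ∀ p : Fin n, τ p p = ⟨0, p.pos⟩)
    (hτlt : ∀ (p x : Fin n) (h : (x : ℕ) < (p : ℕ)),
      τ p x = ⟨(x : ℕ) + 1, lt_of_le_of_lt h p.isLt⟩)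
    (hτgt : ∀ p x : Fin n, (p : ℕ) < (x : ℕ) → τ p x = x)
    (ρ : Fin n → ℤˣ → Equiv.Perm (Fin n × ℤˣ))
    (hρ : ∀ (p : Fin n) (ε : ℤˣ) (x : Fin n) (s : ℤˣ),
      ρ p ε (x, s) =
        (τ p x,
          if ε = -1 ∧ ((τ p x : ℕ) = 0 ∨ (τ p x : ℕ) = n - 1) then -s else s)) :
    ((List.range (n - 1)).map
      (fun m => (∑ p : Fin n, ∑ ε : ℤˣ,
          MonoidAlgebra.of ℚ (Equiv.Perm (Fin n × ℤˣ)) (ρ p ε))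
        - ((2 * m : ℕ) : MonoidAlgebra ℚ (Equiv.Perm (Fin n × ℤˣ))))).prod *
      ((∑ p : Fin n, ∑ ε : ℤˣ,
          MonoidAlgebra.of ℚ (Equiv.Perm (Fin n × ℤˣ)) (ρ p ε))
        - ((2 * n : ℕ) : MonoidAlgebra ℚ (Equiv.Perm (Fin n × ℤˣ)))) = 0 :=
  stmt_14_general ℚ n hn τ hτeq hτlt hτgt ρ hρ
end
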